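/- Let k ≥ 1. The smallest integer L ≥ k+1 such that every locally translation invariant probability measure on {0,1}^{k+1} extends to a translation-invariant probability measure on {0,1}^{ℤ_L} is L_0(k) = lcm{1, 2, ..., 2^k}. -/

import Mathlib

/-- Local translation invariance for a measure on `{0,1}^{k+1}`. -/
def IsLTI (k : ℕ) (μ : (Fin (k + 1) → Bool) → ℝ) : Prop :=
  ∀ η : Fin k → Bool, (∑ σ : Bool, μ (Fin.snoc η σ)) = ∑ σ : Bool, μ (Fin.cons σ η)

/-- `μ` (a measure on `{0,1}^{k+1}`) extends to a translation-invariant probability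
measure on configurations on the ring `ℤ_L` with `L` sites: the cyclic translation
is `finRotate L`, and the marginal on any `k+1` cyclically consecutive sites equals
`μ`. -/
def ExtendsToRing (k L : ℕ) (μ : (Fin (k + 1) → Bool) → ℝ) : Prop :=
  ∃ ν : (Fin L → Bool) → ℝ, (∀ x, 0 ≤ ν x) ∧ (∑ x, ν x) = 1 ∧
    (∀ x, ν (x ∘ finRotate L) = ν x) ∧
    ∀ a : Fin L, ∀ ζ : Fin (k + 1) → Bool,
      (∑ x : Fin L → Bool,
        if (∀ t : Fin (k + 1), x ((finRotate L)^[t] a) = ζ t) then ν x else 0) = μ ζ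


def win (n : ℕ) (s : ℕ → Bool) (j : ℕ) : Fin n → Bool := fun t => s (j + t)

open Finset in
theorem sum_shift1 (p : ℕ) (F : ℕ → ℝ) (h : F p = F 0) :
    ∑ j ∈ range p, F (j + 1) = ∑ j ∈ range p, F j := by
  have h1 := Finset.sum_range_succ F p
  have h2 := Finset.sum_range_succ' F p
  linarith

open Finset in
theorem sum_shift (p a : ℕ) (F : ℕ → ℝ) (h : ∀ j, F (j + p) = F j) :
    ∑ j ∈ range p, F (j + a) = ∑ j ∈ range p, F j := by
  induction a with
  | zero => simp
  | succ a ih =>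
    rw [← ih, ← sum_shift1 p (fun j => F (j + a)) (by rw [add_comm p a, h]; simp)]
    refine Finset.sum_congr rfl fun j _ => ?_
    congr 1; omega

theorem per_mul {s : ℕ → Bool} {p : ℕ} (hs : ∀ j, s (j + p) = s j) (j m : ℕ) :
    s (j + p * m) = s j := by
  induction m with
  | zero => simp
  | succ m ih => rw [Nat.mul_succ, ← add_assoc, hs, ih]

theorem win_per {s : ℕ → Bool} {p : ℕ} (hs : ∀ j, s (j + p) = s j) (n j : ℕ) :
    win n s (j + p) = win n s j := by
  funext t
  simp only [win]
  rw [show j + p + (t : ℕ) = j + t + p by omega, hs]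

theorem win_mod {s : ℕ → Bool} {p : ℕ} (hs : ∀ j, s (j + p) = s j) (n j : ℕ) :
    win n s (j % p) = win n s j := by
  funext t
  simp only [win]
  conv_rhs => rw [← Nat.mod_add_div j p]
  rw [show j % p + p * (j / p) + (t : ℕ) = j % p + t + p * (j / p) by omega, per_mul hs]

noncomputable def cnt (k : ℕ) (s : ℕ → Bool) (p : ℕ) (ζ : Fin (k + 1) → Bool) : ℝ :=
  ∑ j ∈ Finset.range p, if win (k + 1) s j = ζ then 1 else 0

theorem win_snoc (k : ℕ) (s : ℕ → Bool) (j : ℕ) :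
    win (k + 1) s j = Fin.snoc (α := fun _ => Bool) (win k s j) (s (j + k)) := by
  funext t
  refine Fin.lastCases ?_ (fun i => ?_) t <;> simp [win]

theorem win_cons (k : ℕ) (s : ℕ → Bool) (j : ℕ) :
    win (k + 1) s j = Fin.cons (α := fun _ => Bool) (s j) (win k s (j + 1)) := by
  funext t
  refine Fin.cases ?_ (fun i => ?_) t
  · simp [win]
  · simp [win]; congr 1; omega

theorem cnt_lti (k : ℕ) (s : ℕ → Bool) (p : ℕ) (hs : ∀ j, s (j + p) = s j) :
    IsLTI k (cnt k s p) := by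
  intro η
  unfold cnt
  rw [Finset.sum_comm, Finset.sum_comm (s := Finset.univ)]
  have h1 : ∀ j, (∑ σ : Bool, if win (k + 1) s j = Fin.snoc (α := fun _ => Bool) η σ then (1 : ℝ) else 0)
      = if win k s j = η then 1 else 0 := by
    intro j
    simp only [win_snoc, Fin.snoc_inj]
    by_cases h : win k s j = η <;> cases s (j + k) <;> simp [h]
  have h2 : ∀ j, (∑ σ : Bool, if win (k + 1) s j = Fin.cons (α := fun _ => Bool) σ η then (1 : ℝ) else 0)
      = if win k s (j + 1) = η then 1 else 0 := by
    intro j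
    simp only [win_cons, Fin.cons_inj]
    by_cases h : win k s (j + 1) = η <;> cases s j <;> simp [h]
  simp only [h1, h2]
  exact (sum_shift1 p (fun j => if win k s j = η then 1 else 0)
    (by have := win_per hs k 0; simp only [zero_add] at this; simp [this])).symm

theorem cnt_nonneg (k : ℕ) (s : ℕ → Bool) (p : ℕ) (ζ) : 0 ≤ cnt k s p ζ :=
  Finset.sum_nonneg fun j _ => by split_ifs <;> norm_num

theorem cnt_sum (k : ℕ) (s : ℕ → Bool) (p : ℕ) : ∑ ζ, cnt k s p ζ = p := by
  unfold cnt
  rw [Finset.sum_comm]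
  simp

theorem rot_iter (n t : ℕ) (a : Fin (n + 1)) :
    (((finRotate (n + 1))^[t] a : Fin (n + 1)) : ℕ) = (a + t) % (n + 1) := by
  induction t with
  | zero => simp [Nat.mod_eq_of_lt a.2]
  | succ t ih =>
    rw [Function.iterate_succ_apply', finRotate_apply, Fin.val_add, ih, Fin.val_one']
    rw [← Nat.add_mod, add_assoc]

theorem lower (k L p : ℕ) (hL : k + 1 ≤ L) (hp : 0 < p) (s : ℕ → Bool)
    (hs : ∀ j, s (j + p) = s j)
    (hinj : ∀ i < p, ∀ j < p, win k s i = win k s j → i = j)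
    (H : ∀ μ : (Fin (k + 1) → Bool) → ℝ,
          (∀ η, 0 ≤ μ η) → (∑ η, μ η) = 1 → IsLTI k μ → ExtendsToRing k L μ) : p ∣ L := by
  obtain ⟨n, rfl⟩ : ∃ n, L = n + 1 := ⟨L - 1, by omega⟩
  have hpr : (p : ℝ) ≠ 0 := by positivity
  obtain ⟨ν, h0, h1, -, hm⟩ := H (fun ζ => (p : ℝ)⁻¹ * cnt k s p ζ)
    (fun ζ => mul_nonneg (by positivity) (cnt_nonneg ..))
    (by rw [← Finset.mul_sum, cnt_sum, inv_mul_cancel₀ hpr])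
    (by
      intro η
      have := cnt_lti k s p hs η
      simp only [← Finset.mul_sum, this])
  obtain ⟨x, hx⟩ : ∃ x, 0 < ν x := by
    by_contra! hc
    have : ∑ x, ν x ≤ 0 := Finset.sum_nonpos fun x _ => hc x
    linarith
  have key : ∀ a : Fin (n + 1), ∃ j, ∀ t : Fin (k + 1),
      x ((finRotate (n + 1))^[t] a) = s (j + t) := by
    intro a
    by_contra! hc
    have e := hm a (fun t => x ((finRotate (n + 1))^[t] a))
    have e2 : cnt k s p (fun t => x ((finRotate (n + 1))^[t] a)) = 0 := by
      refine Finset.sum_eq_zero fun j _ => if_neg fun h => ?_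
      obtain ⟨t, ht⟩ := hc j
      exact ht (congrFun h t).symm
    beta_reduce at e
    rw [e2, mul_zero] at e
    have := Finset.single_le_sum (f := fun y : Fin (n + 1) → Bool =>
      if (∀ t : Fin (k + 1), y ((finRotate (n + 1))^[t] a) = x ((finRotate (n + 1))^[t] a))
        then ν y else 0) (fun y _ => by split_ifs <;> simp [h0]) (Finset.mem_univ x)
    simp only [implies_true, if_true] at this
    linarith
  choose J hJ using key
  have step : ∀ a, J (finRotate (n + 1) a) ≡ J a + 1 [MOD p] := by
    intro a
    apply hinj _ (Nat.mod_lt _ hp) _ (Nat.mod_lt _ hp)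
    rw [win_mod hs, win_mod hs]
    funext t
    have a1 := hJ (finRotate (n + 1) a) t.castSucc
    have a2 := hJ a t.succ
    simp only [Fin.val_castSucc, Fin.val_succ, Function.iterate_succ_apply] at a1 a2
    simp only [win]
    rw [← a1, a2]
    congr 1; omega
  have steps : ∀ m, J ((finRotate (n + 1))^[m] 0) ≡ J 0 + m [MOD p] := by
    intro m
    induction m with
    | zero => simp; rfl
    | succ m ih =>
      rw [Function.iterate_succ_apply']
      exact (step _).trans (ih.add_right 1)
  have := steps (n + 1)
  have hz : (finRotate (n + 1))^[n + 1] 0 = 0 := by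
    apply Fin.ext
    rw [rot_iter]; simp
  rw [hz] at this
  exact (Nat.modEq_zero_iff_dvd).1 ((Nat.ModEq.add_left_cancel' (J 0) (by simpa using this)).symm)

/-- Extension without normalisation. -/
def Ext0 (k L : ℕ) (μ : (Fin (k + 1) → Bool) → ℝ) : Prop :=
  ∃ ν : (Fin L → Bool) → ℝ, (∀ x, 0 ≤ ν x) ∧
    (∀ x, ν (x ∘ finRotate L) = ν x) ∧
    ∀ a : Fin L, ∀ ζ : Fin (k + 1) → Bool,
      (∑ x : Fin L → Bool,
        if (∀ t : Fin (k + 1), x ((finRotate L)^[t] a) = ζ t) then ν x else 0) = μ ζ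

theorem s_mod {s : ℕ → Bool} {L : ℕ} (hs : ∀ j, s (j + L) = s j) (j m : ℕ) :
    s (j + m % L) = s (j + m) := by
  conv_rhs => rw [← Nat.mod_add_div m L, ← add_assoc, per_mul hs]

theorem cycle_ext (k L p : ℕ) (hL : 0 < L) (s : ℕ → Bool)
    (hs : ∀ j, s (j + p) = s j) (hd : p ∣ L) : Ext0 k L (cnt k s p) := by
  obtain ⟨n, rfl⟩ : ∃ n, L = n + 1 := ⟨L - 1, by omega⟩
  have hsL : ∀ j, s (j + (n + 1)) = s j := by
    intro j
    obtain ⟨m, hm⟩ := hd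
    rw [hm, per_mul hs]
  have ywin : ∀ (j t : ℕ) (a : Fin (n + 1)),
      win (n + 1) s j ((finRotate (n + 1))^[t] a) = s (j + a + t) := by
    intro j t a
    simp only [win]
    rw [rot_iter, s_mod hsL, add_assoc]
  refine ⟨fun x => ∑ j ∈ Finset.range p, if win (n + 1) s j = x then 1 else 0,
    fun x => Finset.sum_nonneg fun j _ => by split_ifs <;> norm_num, fun x => ?_, fun a ζ => ?_⟩
  · dsimp only
    rw [← sum_shift1 p (fun j => if win (n + 1) s j = x ∘ finRotate (n + 1) then (1 : ℝ) else 0)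
      (by have := win_per hs (n + 1) 0; simp only [zero_add] at this; simp [this])]
    refine Finset.sum_congr rfl fun j _ => ?_
    have : win (n + 1) s (j + 1) = win (n + 1) s j ∘ finRotate (n + 1) := by
      funext a
      have := ywin j 1 a
      simp only [Function.iterate_one] at this
      rw [Function.comp, this]
      simp only [win]
      congr 1; omega
    rw [this]
    simp only [(finRotate (n + 1)).surjective.injective_comp_right.eq_iff]
  · rw [cnt, ← sum_shift p a (fun j => if win (k + 1) s j = ζ then (1 : ℝ) else 0)
      (fun j => by simp only [win_per hs])]
    have : ∀ x : Fin (n + 1) → Bool,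
      (if (∀ t : Fin (k + 1), x ((finRotate (n + 1))^[t] a) = ζ t) then
        ∑ j ∈ Finset.range p, (if win (n + 1) s j = x then (1 : ℝ) else 0) else 0)
      = ∑ j ∈ Finset.range p, if win (n + 1) s j = x then
        (if (∀ t : Fin (k + 1), x ((finRotate (n + 1))^[t] a) = ζ t) then 1 else 0) else 0 := by
      intro x
      split_ifs <;> simp
    simp only [this]
    rw [Finset.sum_comm]
    refine Finset.sum_congr rfl fun j _ => ?_
    rw [Finset.sum_ite_eq]
    simp only [Finset.mem_univ, if_true, ywin]
    congr 1
    simp only [eq_iff_iff]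
    constructor
    · intro h; funext t; exact h t
    · intro h t; exact congrFun h t

theorem win_of_edges (k : ℕ) (E : ℕ → Fin (k + 1) → Bool)
    (hE : ∀ j, Fin.tail (E j) = Fin.init (E (j + 1))) (j : ℕ) :
    win (k + 1) (fun j => E j 0) j = E j := by
  have key : ∀ t : ℕ, ∀ (ht : t < k + 1) (j : ℕ), E j ⟨t, ht⟩ = E (j + t) 0 := by
    intro t
    induction t with
    | zero => intro ht j; rfl
    | succ t ih =>
      intro ht j
      have h1 := congrFun (hE j) ⟨t, by omega⟩
      have h2 := ih (by omega) (j + 1)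
      have h3 : E j ⟨t + 1, ht⟩ = E (j + 1) ⟨t, by omega⟩ := h1
      rw [h3, h2]
      congr 1; omega
  funext t
  exact (key t t.2 j).symm

theorem exists_cycle (k : ℕ) (μ : (Fin (k + 1) → Bool) → ℝ) (h0 : ∀ η, 0 ≤ μ η)
    (hl : IsLTI k μ) (hne : ∃ ζ, 0 < μ ζ) :
    ∃ (s : ℕ → Bool) (p : ℕ), 0 < p ∧ p ≤ 2 ^ k ∧ (∀ j, s (j + p) = s j) ∧
      (∀ i < p, ∀ j < p, win k s i = win k s j → i = j) ∧
      ∀ j, 0 < μ (win (k + 1) s j) := by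
  classical
  let P : (Fin k → Bool) → Prop := fun η => ∃ σ : Bool, 0 < μ (Fin.snoc (α := fun _ => Bool) η σ)
  let V := {η // P η}
  have hc : ∀ v : V, ∃ σ : Bool, 0 < μ (Fin.snoc (α := fun _ => Bool) v.1 σ) := fun v => v.2
  choose c hcpos using hc
  let e : V → Fin (k + 1) → Bool := fun v => Fin.snoc (α := fun _ => Bool) v.1 (c v)
  have hnext : ∀ v : V, P (Fin.tail (e v)) := by
    intro v
    by_contra hcon
    simp only [P, not_exists, not_lt] at hcon
    have h1 := hl (Fin.tail (e v))
    have h2 : ∑ σ : Bool, μ (Fin.snoc (α := fun _ => Bool) (Fin.tail (e v)) σ) ≤ 0 :=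
      Finset.sum_nonpos fun σ _ => hcon σ
    have h3 := Finset.single_le_sum
      (f := fun σ : Bool => μ (Fin.cons (α := fun _ => Bool) σ (Fin.tail (e v))))
      (fun σ _ => h0 _) (Finset.mem_univ (e v 0))
    have h4 : (Fin.cons (α := fun _ => Bool) (e v 0) (Fin.tail (e v))) = e v := Fin.cons_self_tail _
    beta_reduce at h3
    rw [h4] at h3
    have := hcpos v
    change 0 < μ (e v) at this
    linarith
  let f : V → V := fun v => ⟨Fin.tail (e v), hnext v⟩
  obtain ⟨ζ, hζ⟩ := hne
  let x0 : V := ⟨Fin.init ζ, ζ (Fin.last k), by rwa [Fin.snoc_init_self]⟩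
  obtain ⟨y, hy⟩ : ∃ y, y ∈ Function.periodicPts f := by
    obtain ⟨m, n, hmn, h⟩ := Finite.exists_ne_map_eq_of_infinite (fun n : ℕ => f^[n] x0)
    wlog hlt : m < n generalizing m n
    · exact this n m hmn.symm h.symm (by omega)
    refine ⟨f^[m] x0, n - m, by omega, ?_⟩
    rw [Function.IsPeriodicPt, Function.IsFixedPt, ← Function.iterate_add_apply]
    rw [show n - m + m = n by omega]
    exact h.symm
  let p := Function.minimalPeriod f y
  let E : ℕ → Fin (k + 1) → Bool := fun j => e (f^[j] y)
  have hw := win_of_edges k E (fun j => by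
    change Fin.tail (e (f^[j] y)) = Fin.init (e (f^[j + 1] y))
    rw [Function.iterate_succ_apply']
    simp only [e, Fin.init_snoc, f])
  refine ⟨fun j => E j 0, p, Function.minimalPeriod_pos_of_mem_periodicPts hy, ?_, ?_, ?_, ?_⟩
  · calc p ≤ Fintype.card V := Function.minimalPeriod_le_card
      _ ≤ Fintype.card (Fin k → Bool) := Fintype.card_subtype_le _
      _ = 2 ^ k := by simp
  · intro j
    simp only [E, p, Function.iterate_add_minimalPeriod_eq]
  · intro i hi j hj hij
    have hk : ∀ j, win k (fun j => E j 0) j = (f^[j] y).1 := by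
      intro j
      have h1 := hw j
      rw [win_snoc] at h1
      have h2 := congrArg Fin.init h1
      simp only [E, e, Fin.init_snoc] at h2
      exact h2
    rw [hk, hk] at hij
    exact (Function.iterate_eq_iterate_iff_of_lt_minimalPeriod hi hj).1 (Subtype.ext hij)
  · intro j
    rw [hw]
    exact hcpos _

theorem Ext0.add {k L : ℕ} {μ₁ μ₂ : (Fin (k + 1) → Bool) → ℝ} (h₁ : Ext0 k L μ₁)
    (h₂ : Ext0 k L μ₂) {c : ℝ} (hc : 0 ≤ c) : Ext0 k L (fun ζ => μ₁ ζ + c * μ₂ ζ) := by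
  obtain ⟨ν₁, a1, a2, a3⟩ := h₁
  obtain ⟨ν₂, b1, b2, b3⟩ := h₂
  refine ⟨fun x => ν₁ x + c * ν₂ x, fun x => add_nonneg (a1 x) (mul_nonneg hc (b1 x)),
    fun x => by simp only [a2, b2], fun a ζ => ?_⟩
  beta_reduce
  rw [← a3 a ζ, ← b3 a ζ, Finset.mul_sum, ← Finset.sum_add_distrib]
  refine Finset.sum_congr rfl fun x _ => ?_
  split_ifs <;> simp

theorem upper0 (k L : ℕ) (hL : 0 < L) (hd : ∀ p, 0 < p → p ≤ 2 ^ k → p ∣ L) :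
    ∀ (n : ℕ) (μ : (Fin (k + 1) → Bool) → ℝ), (∀ η, 0 ≤ μ η) → IsLTI k μ →
      (Finset.univ.filter fun ζ => 0 < μ ζ).card = n → Ext0 k L μ := by
  intro n
  induction n using Nat.strong_induction_on with
  | _ n ih =>
  intro μ h0 hl hn
  by_cases hne : ∃ ζ, 0 < μ ζ
  · obtain ⟨s, p, hp, hp2, hs, hinj, hpos⟩ := exists_cycle k μ h0 hl hne
    obtain ⟨i, hi, hmin⟩ := Finset.exists_min_image (Finset.range p)
      (fun j => μ (win (k + 1) s j)) ⟨0, by simpa⟩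
    have hcnt1 : ∀ j < p, cnt k s p (win (k + 1) s j) = 1 := by
      intro j hj
      rw [cnt, Finset.sum_eq_single j]
      · simp
      · intro b hb hbj
        refine if_neg fun h => hbj ?_
        rw [win_snoc, win_snoc, Fin.snoc_inj] at h
        exact hinj b (Finset.mem_range.1 hb) j hj h.1
      · intro h; exact absurd (Finset.mem_range.2 hj) h
    have hcnt0 : ∀ ζ, (∀ j < p, win (k + 1) s j ≠ ζ) → cnt k s p ζ = 0 := by
      intro ζ h
      exact Finset.sum_eq_zero fun j hj => if_neg (h j (Finset.mem_range.1 hj))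
    set c := μ (win (k + 1) s i) with hc
    have hcpos : 0 < c := hpos i
    let μr : (Fin (k + 1) → Bool) → ℝ := fun ζ => μ ζ - c * cnt k s p ζ
    have hmur : ∀ ζ, 0 ≤ μr ζ := by
      intro ζ
      by_cases h : ∃ j < p, win (k + 1) s j = ζ
      · obtain ⟨j, hj, rfl⟩ := h
        have := hmin j (Finset.mem_range.2 hj)
        simp only [μr, hcnt1 j hj]
        linarith
      · push Not at h
        simp only [μr, hcnt0 ζ h]
        linarith [h0 ζ]
    have hlr : IsLTI k μr := by
      intro η
      simp only [μr, Finset.sum_sub_distrib, ← Finset.mul_sum, hl η, cnt_lti k s p hs η]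
    have hlt : (Finset.univ.filter fun ζ => 0 < μr ζ).card < n := by
      rw [← hn]
      apply Finset.card_lt_card
      rw [Finset.ssubset_iff_of_subset]
      · refine ⟨win (k + 1) s i, by simp [hpos], ?_⟩
        simp [μr, hcnt1 i (Finset.mem_range.1 hi), ← hc]
      · intro ζ
        simp only [Finset.mem_filter, Finset.mem_univ, true_and, μr]
        intro h
        have := mul_nonneg hcpos.le (cnt_nonneg k s p ζ)
        linarith
    have h1 := ih _ hlt μr hmur hlr rfl
    have h2 := h1.add (cycle_ext k L p hL s hs (hd p hp hp2)) hcpos.le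
    simpa [μr] using h2
  · push Not at hne
    have : ∀ ζ, μ ζ = 0 := fun ζ => le_antisymm (hne ζ) (h0 ζ)
    exact ⟨fun _ => 0, by simp, by simp, by simp [this]⟩

theorem upper (k L : ℕ) (hL : 0 < L) (hd : ∀ p, 0 < p → p ≤ 2 ^ k → p ∣ L)
    (μ : (Fin (k + 1) → Bool) → ℝ) (h0 : ∀ η, 0 ≤ μ η) (h1 : ∑ η, μ η = 1) (hl : IsLTI k μ) :
    ExtendsToRing k L μ := by
  obtain ⟨ν, a1, a2, a3⟩ := upper0 k L hL hd _ μ h0 hl rfl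
  refine ⟨ν, a1, ?_, a2, a3⟩
  rw [← h1]
  simp only [← a3 ⟨0, hL⟩]
  rw [Finset.sum_comm]
  refine Finset.sum_congr rfl fun x _ => ?_
  simp only [← funext_iff]
  simp

theorem field_data0 (k : ℕ) (hk : 1 ≤ k) (F : Type) [Field F] [Algebra (ZMod 2) F] [Finite F]
    (hcard : Nat.card F = 2 ^ k) (hfin : Module.finrank (ZMod 2) F = k) :
    ∃ (g e : F) (φ : F → Fin k → Bool),
    g ≠ 0 ∧ e ≠ 0 ∧ orderOf g = 2 ^ k - 1 ∧ Function.Injective φ ∧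
    ∀ x y, (y = g * x ∨ y = g * x + e) → ∀ (i : ℕ) (hi : i + 1 < k),
      φ y ⟨i, by omega⟩ = φ x ⟨i + 1, hi⟩ := by
  classical
  obtain ⟨g, hg⟩ := IsCyclic.exists_generator (α := Fˣ)
  have hord : orderOf (g : F) = 2 ^ k - 1 := by
    rw [orderOf_units, orderOf_eq_card_of_forall_mem_zpowers hg, Nat.card_units, hcard]
  let T : F →ₗ[ZMod 2] ZMod 2 := Algebra.trace (ZMod 2) F
  have hT : ∃ z, T z ≠ 0 := by
    by_contra! h
    exact Algebra.trace_ne_zero (ZMod 2) F (LinearMap.ext h)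
  let Φ : F →ₗ[ZMod 2] (Fin k → ZMod 2) :=
    LinearMap.pi fun i => T ∘ₗ LinearMap.mulLeft (ZMod 2) ((g : F) ^ (i : ℕ))
  have hΦ : ∀ x i, Φ x i = T ((g : F) ^ (i : ℕ) * x) := fun x i => rfl
  have hspan : ∀ y : F, y ∈ Submodule.span (ZMod 2) (Set.range fun i : Fin k => (g : F) ^ (i : ℕ)) := by
    intro y
    have hint : IsIntegral (ZMod 2) (g : F) := Algebra.IsIntegral.isIntegral _
    have h1 : y ∈ Submodule.span (ZMod 2)
        (Set.range fun i : Fin (minpoly (ZMod 2) (g : F)).natDegree => (g : F) ^ (i : ℕ)) := by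
      by_cases hy : y = 0
      · rw [hy]; exact Submodule.zero_mem _
      obtain ⟨n, hn⟩ := (mem_powers_iff_mem_zpowers (x := g)).2 (hg (Units.mk0 y hy))
      have hnr : (g : F) ^ n = y := by
        have := congrArg (Units.val) hn
        simpa using this
      apply hint.mem_span_pow
      exact ⟨Polynomial.X ^ n, by simp [hnr]⟩
    refine Submodule.span_mono ?_ h1
    rintro _ ⟨i, rfl⟩
    have : (minpoly (ZMod 2) (g : F)).natDegree ≤ k := hfin ▸ minpoly.natDegree_le _
    exact ⟨⟨i, by omega⟩, rfl⟩
  have hinj : Function.Injective Φ := by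
    rw [injective_iff_map_eq_zero]
    intro x hx
    by_contra hx0
    obtain ⟨z, hz⟩ := hT
    have : ∀ y : F, T (y * x) = 0 := by
      intro y
      refine Submodule.span_induction (p := fun y _ => T (y * x) = 0) ?_ ?_ ?_ ?_ (hspan y)
      · rintro _ ⟨i, rfl⟩
        exact congrFun hx i
      · simp
      · intro a b _ _ ha hb
        rw [add_mul, map_add, ha, hb, add_zero]
      · intro a b _ hb
        rw [smul_mul_assoc, map_smul, hb, smul_zero]
    apply hz
    have := this (z * x⁻¹)
    rwa [mul_assoc, inv_mul_cancel₀ hx0, mul_one] at this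
  have hsurj : Function.Surjective Φ :=
    (LinearMap.injective_iff_surjective_of_finrank_eq_finrank (by simp [hfin])).1 hinj
  obtain ⟨e, he⟩ := hsurj (Pi.single ⟨k - 1, by omega⟩ 1)
  refine ⟨g, e, fun x i => decide (Φ x i = 1), g.ne_zero, ?_, hord,
    ?_, ?_⟩
  · rintro rfl
    have := congrFun he ⟨k - 1, by omega⟩
    simp at this
  · intro x y hxy
    apply hinj
    funext i
    have := congrFun hxy i
    simp only [decide_eq_decide] at this
    have h2 : ∀ a b : ZMod 2, (a = 1 ↔ b = 1) → a = b := by decide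
    exact h2 _ _ this
  · intro x y hxy i hi
    have hm : Φ (g * x) ⟨i, by omega⟩ = Φ x ⟨i + 1, hi⟩ := by
      rw [hΦ, hΦ]
      congr 1
      simp only [pow_succ, mul_assoc]
    have : Φ y ⟨i, by omega⟩ = Φ x ⟨i + 1, hi⟩ := by
      rcases hxy with rfl | rfl
      · exact hm
      · rw [map_add, he, Pi.add_apply, hm, Pi.single_eq_of_ne, add_zero]
        intro h
        have := congrArg Fin.val h
        simp only at this
        omega
    simp only [this]

theorem field_data (k : ℕ) (hk : 1 ≤ k) :
    ∃ (F : Type) (_ : Field F) (g e : F) (φ : F → Fin k → Bool),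
    CharP F 2 ∧ g ≠ 0 ∧ e ≠ 0 ∧ orderOf g = 2 ^ k - 1 ∧ Function.Injective φ ∧
    ∀ x y, (y = g * x ∨ y = g * x + e) → ∀ (i : ℕ) (hi : i + 1 < k),
      φ y ⟨i, by omega⟩ = φ x ⟨i + 1, hi⟩ := by
  obtain ⟨g, e, φ, h⟩ := field_data0 k hk (GaloisField 2 k) (GaloisField.card 2 k (by omega))
    (GaloisField.finrank 2 (by omega))
  exact ⟨GaloisField 2 k, inferInstance, g, e, φ, inferInstance, h⟩

theorem pancyclic (k : ℕ) (hk : 1 ≤ k) (p : ℕ) (hp : 0 < p) (hp2 : p ≤ 2 ^ k) :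
    ∃ s : ℕ → Bool, (∀ j, s (j + p) = s j) ∧
      ∀ i < p, ∀ j < p, win k s i = win k s j → i = j := by
  obtain ⟨F, _, g, e, φ, _, hg, he, hord, hφ, hstep⟩ := field_data k hk
  have hg1 : g ^ (2 ^ k - 1) = 1 := hord ▸ pow_orderOf_eq_one g
  have hpow : ∀ i < 2 ^ k - 1, ∀ j < 2 ^ k - 1, g ^ i = g ^ j → i = j := by
    intro i hi j hj h
    exact pow_injOn_Iio_orderOf (by simpa [hord] using hi) (by simpa [hord] using hj) h
  suffices ∃ w : ℕ → F, (∀ i < p, ∀ j < p, w i = w j → i = j) ∧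
      (∀ j, j + 1 < p → (w (j + 1) = g * w j ∨ w (j + 1) = g * w j + e)) ∧
      (w 0 = g * w (p - 1) ∨ w 0 = g * w (p - 1) + e) by
    obtain ⟨w, hinj, hw, hlast⟩ := this
    have hv : ∀ j, w ((j + 1) % p) = g * w (j % p) ∨ w ((j + 1) % p) = g * w (j % p) + e := by
      intro j
      have hlt := Nat.mod_lt j hp
      by_cases h : j % p + 1 < p
      · rw [show (j + 1) % p = j % p + 1 by rw [Nat.add_mod_eq_ite, Nat.mod_eq_of_lt (a := 1) (by omega)]; simp; omega]
        exact hw _ h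
      · have h1 : j % p = p - 1 := by omega
        have h2 : (j + 1) % p = 0 := by
          apply Nat.mod_eq_zero_of_dvd
          have := Nat.mod_add_div j p
          exact ⟨j / p + 1, by rw [Nat.mul_succ]; omega⟩
        rw [h1, h2]
        exact hlast
    have key : ∀ t i j (h : i + t < k), φ (w (j % p)) ⟨i + t, h⟩ = φ (w ((j + t) % p)) ⟨i, by omega⟩ := by
      intro t
      induction t with
      | zero => intro i j h; rfl
      | succ t ih =>
        intro i j h
        rw [show j + (t + 1) = (j + t) + 1 by omega, hstep _ _ (hv (j + t)) i (by omega),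
          ← ih (i + 1) j (by omega)]
        congr 2; omega
    refine ⟨fun j => φ (w (j % p)) ⟨0, by omega⟩, fun j => by simp, fun i hi j hj h => ?_⟩
    have hwin : ∀ j, win k (fun j => φ (w (j % p)) ⟨0, by omega⟩) j = φ (w (j % p)) := by
      intro j
      funext t
      simp only [win]
      rw [← key t 0 j (by omega)]
      congr 1
      exact Fin.ext (by simp)
    rw [hwin, hwin] at h
    have := hinj _ (Nat.mod_lt _ hp) _ (Nat.mod_lt _ hp) (hφ h)
    rwa [Nat.mod_eq_of_lt hi, Nat.mod_eq_of_lt hj] at this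
  have h2k : 2 ≤ 2 ^ k := by simpa using Nat.pow_le_pow_right (n := 2) (by norm_num) hk
  have hpowc : ∀ c : F, c ≠ 0 → ∀ i < 2 ^ k - 1, ∀ j < 2 ^ k - 1, g ^ i * c = g ^ j * c → i = j :=
    fun c hc i hi j hj h => hpow i hi j hj (mul_right_cancel₀ hc h)
  rcases lt_trichotomy p (2 ^ k - 1) with h | h | h
  · have hne : (1 : F) + g ^ p ≠ 0 := by
      intro h0
      have h1 : g ^ p = g ^ 0 := by
        rw [pow_zero]
        exact (CharTwo.add_eq_zero.1 h0).symm
      have := hpow p h 0 (by omega) h1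
      omega
    refine ⟨fun j => g ^ j * (e / (1 + g ^ p)), ?_, ?_, ?_⟩
    · intro i hi j hj hij
      exact hpowc _ (div_ne_zero he hne) i (by omega) j (by omega) hij
    · intro j _; left; simp only [pow_succ]; ring
    · right
      have : g * (g ^ (p - 1) * (e / (1 + g ^ p))) = g ^ p * (e / (1 + g ^ p)) := by
        rw [← mul_assoc, ← pow_succ', Nat.sub_add_cancel hp]
      beta_reduce
      rw [this, pow_zero, one_mul]
      have hc : (1 + g ^ p) * (e / (1 + g ^ p)) = e := mul_div_cancel₀ e hne
      linear_combination hc - (g ^ p * (e / (1 + g ^ p))) * (CharTwo.two_eq_zero (R := F))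
  · refine ⟨fun j => g ^ j, ?_, ?_, ?_⟩
    · intro i hi j hj hij
      exact hpow i (by omega) j (by omega) hij
    · intro j _; left; simp only [pow_succ]; ring
    · left
      beta_reduce
      rw [← pow_succ', Nat.sub_add_cancel hp, h, hg1, pow_zero]
  · have hpe : p = 2 ^ k := by omega
    refine ⟨fun j => if j = 0 then 0 else g ^ (j - 1) * e, ?_, ?_, ?_⟩
    · intro i hi j hj hij
      beta_reduce at hij
      have hz : ∀ n, g ^ n * e ≠ 0 := fun n => mul_ne_zero (pow_ne_zero _ hg) he
      split_ifs at hij with h1 h2 h2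
      · omega
      · exact absurd hij.symm (hz _)
      · exact absurd hij (hz _)
      · have := hpowc e he (i - 1) (by omega) (j - 1) (by omega) hij
        omega
    · intro j _
      by_cases hj : j = 0
      · subst hj; right; simp
      · left
        obtain ⟨m, rfl⟩ : ∃ m, j = m + 1 := ⟨j - 1, by omega⟩
        simp [pow_succ]; ring
    · right
      have : p - 1 ≠ 0 := by omega
      simp only [this, if_true, if_false]
      rw [← mul_assoc, ← pow_succ', show p - 1 - 1 + 1 = 2 ^ k - 1 by omega, hg1, one_mul,
        CharTwo.add_self_eq_zero]

/-- The least `L ≥ k+1` such that every LTI probability measure on `{0,1}^{k+1}`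
extends to a TI measure on the ring `ℤ_L` is `lcm {1, 2, ..., 2^k}`. -/
theorem stmt15 (k : ℕ) (hk : 1 ≤ k) :
    IsLeast {L : ℕ | k + 1 ≤ L ∧
        ∀ μ : (Fin (k + 1) → Bool) → ℝ,
          (∀ η, 0 ≤ μ η) → (∑ η, μ η) = 1 → IsLTI k μ → ExtendsToRing k L μ}
      ((Finset.Icc 1 (2 ^ k)).lcm id) := by
  have hdvd : ∀ p, 0 < p → p ≤ 2 ^ k → p ∣ (Finset.Icc 1 (2 ^ k)).lcm id := fun p hp hp2 =>
    Finset.dvd_lcm (f := id) (Finset.mem_Icc.2 ⟨hp, hp2⟩)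
  have hpos : 0 < (Finset.Icc 1 (2 ^ k)).lcm id := by
    apply Nat.pos_of_ne_zero
    intro h
    rw [Finset.lcm_eq_zero_iff] at h
    simp at h
  constructor
  · refine ⟨?_, fun μ h0 h1 hl => upper k _ hpos hdvd μ h0 h1 hl⟩
    have h1 := Nat.le_of_dvd hpos (hdvd (2 ^ k) (by positivity) le_rfl)
    have h2 : k < 2 ^ k := Nat.lt_two_pow_self
    omega
  · rintro L ⟨hL, H⟩
    apply Nat.le_of_dvd (by omega)
    apply Finset.lcm_dvd
    intro p hp
    obtain ⟨hp, hp2⟩ := Finset.mem_Icc.1 hp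
    obtain ⟨s, hs, hinj⟩ := pancyclic k hk p hp hp2
    exact lower k L p hL hp s hs hinj H
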